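/- The broadcast regularization of mutual information I_b^{(∞)} vanishes on separable states: if ρ_{AB} = ∑_k p_k ρ^k_A ⊗ ρ^k_B, then lim_n (I_b)_n(ρ_{AB})/n = 0. -/

import Mathlib

open scoped BigOperators Kronecker ComplexOrder
open Matrix Filter Topology

noncomputable section

/-- Shannon entropy (log base 2) of a finitely supported distribution. -/
def shannon {I : Type} [Fintype I] (p : I → ℝ) : ℝ := -∑ i, p i * Real.logb 2 (p i)

/-- `p` is a probability distribution. -/
def IsProbDist {I : Type} [Fintype I] (p : I → ℝ) : Prop :=
  (∀ i, 0 ≤ p i) ∧ ∑ i, p i = 1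

/-- First marginal of a joint distribution. -/
def margA {I J : Type} [Fintype J] (p : I × J → ℝ) : I → ℝ := fun i => ∑ j, p (i, j)

/-- Second marginal of a joint distribution. -/
def margB {I J : Type} [Fintype I] (p : I × J → ℝ) : J → ℝ := fun j => ∑ i, p (i, j)

/-- Classical mutual information of a joint distribution. -/
def classMI {I J : Type} [Fintype I] [Fintype J] (p : I × J → ℝ) : ℝ :=
  shannon (margA p) + shannon (margB p) - shannon p

/-- Kullback-Leibler divergence (log base 2). -/
def klDiv {I : Type} [Fintype I] (p q : I → ℝ) : ℝ := ∑ i, p i * Real.logb 2 (p i / q i)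

/-- A density operator: positive semidefinite with unit trace. -/
def IsDensity {n : Type} [Fintype n] (ρ : Matrix n n ℂ) : Prop :=
  ρ.PosSemidef ∧ ρ.trace = 1

/-- Von Neumann entropy (log base 2) via the eigenvalues of a Hermitian matrix. -/
def vnEntropy {n : Type} [Fintype n] [DecidableEq n] (ρ : Matrix n n ℂ) : ℝ :=
  if h : ρ.IsHermitian then -∑ i, h.eigenvalues i * Real.logb 2 (h.eigenvalues i) else 0

/-- Partial trace over the second tensor factor. -/
def ptraceB {A B : Type} [Fintype B] (ρ : Matrix (A × B) (A × B) ℂ) : Matrix A A ℂ :=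
  Matrix.of fun a a' => ∑ b, ρ (a, b) (a', b)

/-- Partial trace over the first tensor factor. -/
def ptraceA {A B : Type} [Fintype A] (ρ : Matrix (A × B) (A × B) ℂ) : Matrix B B ℂ :=
  Matrix.of fun b b' => ∑ a, ρ (a, b) (a, b')

/-- Quantum mutual information I(A:B) = S(ρ_A) + S(ρ_B) - S(ρ_{AB}). -/
def mutInfo {A B : Type} [Fintype A] [Fintype B] [DecidableEq A] [DecidableEq B]
    (ρ : Matrix (A × B) (A × B) ℂ) : ℝ :=
  vnEntropy (ptraceB ρ) + vnEntropy (ptraceA ρ) - vnEntropy ρ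

/-- Tensor product of two bipartite states, with the cut (A₁A₂ : B₁B₂). -/
def tens2 {A₁ B₁ A₂ B₂ : Type}
    (ρ : Matrix (A₁ × B₁) (A₁ × B₁) ℂ) (σ : Matrix (A₂ × B₂) (A₂ × B₂) ℂ) :
    Matrix ((A₁ × A₂) × (B₁ × B₂)) ((A₁ × A₂) × (B₁ × B₂)) ℂ :=
  Matrix.of fun x y => ρ (x.1.1, x.2.1) (y.1.1, y.2.1) * σ (x.1.2, x.2.2) (y.1.2, y.2.2)

/-- n-fold tensor power of a bipartite state, with the A^n : B^n cut. -/
def tpow {A B : Type} (σ : Matrix (A × B) (A × B) ℂ) (n : ℕ) :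
    Matrix ((Fin n → A) × (Fin n → B)) ((Fin n → A) × (Fin n → B)) ℂ :=
  Matrix.of fun x y => ∏ i, σ (x.1 i, x.2 i) (y.1 i, y.2 i)

/-- Reduced state of the k-th copy (partial trace over all other copies). -/
def copyMarginal {A B : Type} [Fintype A] [Fintype B] [DecidableEq A] [DecidableEq B] {n : ℕ}
    (ρ : Matrix ((Fin n → A) × (Fin n → B)) ((Fin n → A) × (Fin n → B)) ℂ) (k : Fin n) :
    Matrix (A × B) (A × B) ℂ :=
  Matrix.of fun x y => ∑ f : Fin n → A, ∑ g : Fin n → B,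
    if f k = x.1 ∧ g k = x.2 then
      ρ (f, g) (Function.update f k y.1, Function.update g k y.2) else 0

/-- `τ` is an n-copy broadcast state of `ρ`. -/
def IsBroadcast {A B : Type} [Fintype A] [Fintype B] [DecidableEq A] [DecidableEq B] (n : ℕ)
    (τ : Matrix ((Fin n → A) × (Fin n → B)) ((Fin n → A) × (Fin n → B)) ℂ)
    (ρ : Matrix (A × B) (A × B) ℂ) : Prop :=
  IsDensity τ ∧ ∀ k : Fin n, copyMarginal τ k = ρ

/-- n-copy broadcast mutual information (I_b)_n. -/
def Ib {A B : Type} [Fintype A] [Fintype B] [DecidableEq A] [DecidableEq B] (n : ℕ)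
    (ρ : Matrix (A × B) (A × B) ℂ) : ℝ :=
  sInf {x | ∃ τ, IsBroadcast n τ ρ ∧ x = mutInfo τ}

/-- Partial trace of a state on (A A' : B B') over the primed (ancilla) systems. -/
def ptracePrime {A B A' B' : Type} [Fintype A'] [Fintype B']
    (τ : Matrix ((A × A') × (B × B')) ((A × A') × (B × B')) ℂ) :
    Matrix (A × B) (A × B) ℂ :=
  Matrix.of fun x y => ∑ a', ∑ b', τ ((x.1, a'), (x.2, b')) ((y.1, a'), (y.2, b'))

/-- Partial trace of a state on (A A' : B B') over the unprimed systems. -/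
def ptraceMain {A B A' B' : Type} [Fintype A] [Fintype B]
    (τ : Matrix ((A × A') × (B × B')) ((A × A') × (B × B')) ℂ) :
    Matrix (A' × B') (A' × B') ℂ :=
  Matrix.of fun x y => ∑ a, ∑ b, τ ((a, x.1), (b, x.2)) ((a, y.1), (b, y.2))

/-- Conditional entanglement of mutual information (CEMI). -/
def EI {A B : Type} [Fintype A] [Fintype B] [DecidableEq A] [DecidableEq B]
    (ρ : Matrix (A × B) (A × B) ℂ) : ℝ :=
  (1 / 2) * sInf {x | ∃ (dA dB : ℕ)
    (τ : Matrix ((A × Fin dA) × (B × Fin dB)) ((A × Fin dA) × (B × Fin dB)) ℂ),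
    IsDensity τ ∧ ptracePrime τ = ρ ∧ x = mutInfo τ - mutInfo (ptraceMain τ)}

/-- Classical squashed entanglement, via the ensemble formula. -/
def EsqC {A B : Type} [Fintype A] [Fintype B] [DecidableEq A] [DecidableEq B]
    (ρ : Matrix (A × B) (A × B) ℂ) : ℝ :=
  (1 / 2) * sInf {x | ∃ (m : ℕ) (p : Fin m → ℝ) (σ : Fin m → Matrix (A × B) (A × B) ℂ),
    (∀ k, 0 ≤ p k) ∧ (∑ k, p k = 1) ∧ (∀ k, IsDensity (σ k)) ∧
    (∑ k, (p k : ℂ) • σ k = ρ) ∧ x = ∑ k, p k * mutInfo (σ k)}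

/-- Separability of a bipartite state. -/
def Separable {A B : Type} [Fintype A] [Fintype B]
    (ρ : Matrix (A × B) (A × B) ℂ) : Prop :=
  ∃ (m : ℕ) (p : Fin m → ℝ) (σA : Fin m → Matrix A A ℂ) (σB : Fin m → Matrix B B ℂ),
    (∀ k, 0 ≤ p k) ∧ (∑ k, p k = 1) ∧ (∀ k, IsDensity (σA k) ∧ IsDensity (σB k)) ∧
    ρ = ∑ k, (p k : ℂ) • (σA k ⊗ₖ σB k)

/-- A finite POVM. -/
def IsPOVM {A ι : Type} [Fintype A] [Fintype ι] [DecidableEq A]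
    (M : ι → Matrix A A ℂ) : Prop :=
  (∀ i, (M i).PosSemidef) ∧ ∑ i, M i = 1

/-- Outcome distribution of a local product measurement. -/
def measProb {A B ι κ : Type} [Fintype A] [Fintype B]
    (M : ι → Matrix A A ℂ) (N : κ → Matrix B B ℂ)
    (ρ : Matrix (A × B) (A × B) ℂ) : ι × κ → ℝ :=
  fun x => (((M x.1 ⊗ₖ N x.2) * ρ).trace).re

/-- Completeness condition for a family of Kraus operators. -/
def IsKraus {A A' ι : Type} [Fintype A] [Fintype A'] [Fintype ι] [DecidableEq A]
    (K : ι → Matrix A' A ℂ) : Prop :=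
  ∑ i, (K i)ᴴ * K i = 1

/-- Action of the product channel Λ_A ⊗ Λ_B (given by Kraus operators) on a bipartite state. -/
def localApply {A B A' B' ι κ : Type} [Fintype A] [Fintype B] [Fintype ι] [Fintype κ]
    (K : ι → Matrix A' A ℂ) (L : κ → Matrix B' B ℂ)
    (ρ : Matrix (A × B) (A × B) ℂ) : Matrix (A' × B') (A' × B') ℂ :=
  ∑ i, ∑ j, (K i ⊗ₖ L j) * ρ * (K i ⊗ₖ L j)ᴴ

/-- Measured relative entropy distance to separable states (with optimization over local POVMs). -/
def measREE {A B : Type} [Fintype A] [Fintype B] [DecidableEq A] [DecidableEq B]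
    (ρ : Matrix (A × B) (A × B) ℂ) : ℝ :=
  sInf {x | ∃ σ : Matrix (A × B) (A × B) ℂ, IsDensity σ ∧ Separable σ ∧
    x = sSup {y | ∃ (m m' : ℕ) (M : Fin m → Matrix A A ℂ) (N : Fin m' → Matrix B B ℂ),
      IsPOVM M ∧ IsPOVM N ∧ y = klDiv (measProb M N ρ) (measProb M N σ)}}

/-!
The de Finetti state `∑ k, p k • (ρA k ⊗ ρB k)^{⊗n}` is an `n`-copy broadcast of a separable `ρ`,
and its mutual information is bounded independently of `n`: mixing states with weights `p` raises
the entropy above the average by an amount between `0` and the Shannon entropy `H(p)`, so the two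
marginal entropies exceed their averages by at most `H(p)` each, while the averages themselves are
cancelled by the joint entropy, entropy being additive on product states. This gives `2 H(p)`; the
sharper bound `H(p)` would require strong subadditivity. Dividing by `n` gives the limit, as
`Ib n ρ ≥ 0` by subadditivity of entropy.

The quantum inequalities reduce to classical ones by the Peierls inequality
`spectralSum_le_sum_diag`: for a concave `f`, the sum of `f` over the eigenvalues is at most its sum
over the diagonal, in any orthonormal basis.
-/

lemma re_diag_nonneg {𝕜 n : Type*} [RCLike 𝕜] {M : Matrix n n 𝕜} (hM : M.PosSemidef) (i : n) :
    0 ≤ RCLike.re (M i i) :=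
  (RCLike.nonneg_iff.1 hM.diag_nonneg).1

section Unitary

variable {𝕜 n : Type*} [RCLike 𝕜] [Fintype n] [DecidableEq n]

lemma sum_norm_sq_row_of_mem_unitaryGroup {U : Matrix n n 𝕜} (hU : U ∈ unitaryGroup n 𝕜) (i : n) :
    ∑ j, ‖U i j‖ ^ 2 = 1 := by
  have h := congrFun₂ (mem_unitaryGroup_iff.1 hU) i i
  simp only [mul_apply, star_apply, RCLike.star_def, RCLike.mul_conj, one_apply_eq] at h
  exact_mod_cast h

lemma sum_norm_sq_col_of_mem_unitaryGroup {U : Matrix n n 𝕜} (hU : U ∈ unitaryGroup n 𝕜) (j : n) :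
    ∑ i, ‖U i j‖ ^ 2 = 1 := by
  simpa [star_apply] using sum_norm_sq_row_of_mem_unitaryGroup (Unitary.star_mem hU) j

lemma eigenvectorUnitary_mul_diagonal_mul_conjTranspose {M : Matrix n n 𝕜} (hM : M.IsHermitian) :
    (hM.eigenvectorUnitary : Matrix n n 𝕜) * diagonal (fun i => (hM.eigenvalues i : 𝕜)) *
      (hM.eigenvectorUnitary : Matrix n n 𝕜)ᴴ = M :=
  hM.spectral_theorem.symm

lemma conjTranspose_eigenvectorUnitary_mul_mul {M : Matrix n n 𝕜} (hM : M.IsHermitian) :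
    (hM.eigenvectorUnitary : Matrix n n 𝕜)ᴴ * M * (hM.eigenvectorUnitary : Matrix n n 𝕜) =
      diagonal (fun i => (hM.eigenvalues i : 𝕜)) :=
  (Unitary.conjStarAlgAut_star_apply ..).symm.trans hM.conjStarAlgAut_star_eigenvectorUnitary

lemma exists_mul_conjTranspose_eq_and_conjTranspose_mul_eq_diagonal {M : Matrix n n 𝕜}
    (hM : M.PosSemidef) :
    ∃ B : Matrix n n 𝕜, B * Bᴴ = M ∧ Bᴴ * B = diagonal fun i => (hM.1.eigenvalues i : 𝕜) := by
  set U := (hM.1.eigenvectorUnitary : Matrix n n 𝕜)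
  set R : Matrix n n 𝕜 := diagonal fun i => (√(hM.1.eigenvalues i) : 𝕜)
  have hR : Rᴴ = R := by simp [R, diagonal_conjTranspose, Pi.star_def]
  have hRR : R * R = diagonal fun i => (hM.1.eigenvalues i : 𝕜) := by
    simp only [R, diagonal_mul_diagonal, ← RCLike.ofReal_mul,
      Real.mul_self_sqrt (hM.eigenvalues_nonneg _)]
  have hU : Uᴴ * U = 1 := Unitary.coe_star_mul_self _
  refine ⟨U * R, ?_, ?_⟩
  · rw [conjTranspose_mul, hR, mul_assoc, ← mul_assoc R, hRR, ← mul_assoc]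
    exact eigenvectorUnitary_mul_diagonal_mul_conjTranspose hM.1
  · rw [conjTranspose_mul, hR, mul_assoc, ← mul_assoc Uᴴ, hU, one_mul, hRR]

end Unitary

section SpectralSum

variable {𝕜 m n : Type*} [RCLike 𝕜] [Fintype m] [DecidableEq m] [Fintype n] [DecidableEq n]
  {f : ℝ → ℝ}

/-- The trace function `tr f(M)`, that is `∑ f(λᵢ)` over the eigenvalues of `M`. Reading the
eigenvalues off the characteristic polynomial makes it defined without a proof that `M` is
Hermitian, and `tr f(PQ) = tr f(QP)` available for rectangular factors. -/
def spectralSum (f : ℝ → ℝ) (M : Matrix n n 𝕜) : ℝ :=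
  (M.charpoly.roots.map fun z => f (RCLike.re z)).sum

lemma spectralSum_diagonal (f : ℝ → ℝ) (d : n → ℝ) :
    spectralSum f (diagonal fun i => (d i : 𝕜)) = ∑ i, f (d i) := by
  have hroots : (∏ i, (Polynomial.X - Polynomial.C (d i : 𝕜))).roots =
      Finset.univ.val.map fun i => (d i : 𝕜) := by
    rw [Polynomial.roots_prod _ _
      (Finset.prod_ne_zero_iff.2 fun i _ => Polynomial.X_sub_C_ne_zero _)]
    simp
  simp [spectralSum, charpoly_diagonal, hroots]

lemma spectralSum_mul_comm (hf : f 0 = 0) (P : Matrix m n 𝕜) (Q : Matrix n m 𝕜) :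
    spectralSum f (P * Q) = spectralSum f (Q * P) := by
  have hroots := congrArg Polynomial.roots (charpoly_mul_comm' P Q)
  rw [Polynomial.roots_mul ((Polynomial.monic_X_pow _).mul (charpoly_monic _)).ne_zero,
    Polynomial.roots_mul ((Polynomial.monic_X_pow _).mul (charpoly_monic _)).ne_zero,
    Polynomial.roots_X_pow, Polynomial.roots_X_pow] at hroots
  simpa [spectralSum, hf, Multiset.map_nsmul, Multiset.sum_nsmul] using
    congrArg (fun s => (s.map fun z : 𝕜 => f (RCLike.re z)).sum) hroots

lemma spectralSum_conjTranspose_mul_mul (f : ℝ → ℝ) (M : Matrix n n 𝕜) {U : Matrix n n 𝕜}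
    (hU : U ∈ unitaryGroup n 𝕜) : spectralSum f (Uᴴ * M * U) = spectralSum f M := by
  rw [spectralSum, charpoly_mul_comm, ← mul_assoc, ← star_eq_conjTranspose,
    mem_unitaryGroup_iff.1 hU, one_mul, spectralSum]

lemma spectralSum_eq_sum_eigenvalues (f : ℝ → ℝ) {M : Matrix n n 𝕜} (hM : M.IsHermitian) :
    spectralSum f M = ∑ i, f (hM.eigenvalues i) := by
  rw [← spectralSum_conjTranspose_mul_mul f M hM.eigenvectorUnitary.2,
    conjTranspose_eigenvectorUnitary_mul_mul, spectralSum_diagonal]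

lemma spectralSum_smul (f : ℝ → ℝ) (c : ℝ) {M : Matrix n n 𝕜} (hM : M.IsHermitian) :
    spectralSum f (c • M) = ∑ i, f (c * hM.eigenvalues i) := by
  rw [← spectralSum_conjTranspose_mul_mul f _ hM.eigenvectorUnitary.2, Matrix.mul_smul,
    Matrix.smul_mul, conjTranspose_eigenvectorUnitary_mul_mul, ← diagonal_smul,
    ← spectralSum_diagonal (𝕜 := 𝕜)]
  congr; ext; simp [Algebra.smul_def]

lemma spectralSum_kronecker (f : ℝ → ℝ) {M : Matrix m m 𝕜} {N : Matrix n n 𝕜}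
    (hM : M.IsHermitian) (hN : N.IsHermitian) :
    spectralSum f (M ⊗ₖ N) = ∑ i, ∑ j, f (hM.eigenvalues i * hN.eigenvalues j) := by
  rw [← spectralSum_conjTranspose_mul_mul f _
      (kronecker_mem_unitary hM.eigenvectorUnitary.2 hN.eigenvectorUnitary.2),
    conjTranspose_kronecker, ← mul_kronecker_mul, ← mul_kronecker_mul,
    conjTranspose_eigenvectorUnitary_mul_mul, conjTranspose_eigenvectorUnitary_mul_mul,
    diagonal_kronecker_diagonal, ← Fintype.sum_prod_type', ← spectralSum_diagonal (𝕜 := 𝕜)]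
  simp only [RCLike.ofReal_mul]

lemma re_diag_eq_sum_norm_sq_mul_eigenvalues {M : Matrix n n 𝕜} (hM : M.IsHermitian) (i : n) :
    RCLike.re (M i i) =
      ∑ j, ‖(hM.eigenvectorUnitary : Matrix n n 𝕜) i j‖ ^ 2 * hM.eigenvalues j := by
  conv_lhs => rw [← eigenvectorUnitary_mul_diagonal_mul_conjTranspose hM, mul_apply]
  rw [map_sum]
  refine Finset.sum_congr rfl fun j _ => ?_
  rw [mul_diagonal, conjTranspose_apply, mul_right_comm, RCLike.star_def, RCLike.mul_conj]
  norm_cast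

lemma spectralSum_le_sum_diag (hf : ConcaveOn ℝ (Set.Ici 0) f) {M : Matrix n n 𝕜}
    (hM : M.PosSemidef) : spectralSum f M ≤ ∑ i, f (RCLike.re (M i i)) := by
  set U := (hM.1.eigenvectorUnitary : Matrix n n 𝕜)
  have hU : U ∈ unitaryGroup n 𝕜 := hM.1.eigenvectorUnitary.2
  calc spectralSum f M = ∑ j, (∑ i, ‖U i j‖ ^ 2) * f (hM.1.eigenvalues j) := by
        simp only [spectralSum_eq_sum_eigenvalues f hM.1,
          sum_norm_sq_col_of_mem_unitaryGroup hU, one_mul]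
    _ = ∑ i, ∑ j, ‖U i j‖ ^ 2 * f (hM.1.eigenvalues j) := by
        simp only [Finset.sum_mul]
        exact Finset.sum_comm
    _ ≤ ∑ i, f (∑ j, ‖U i j‖ ^ 2 * hM.1.eigenvalues j) :=
        Finset.sum_le_sum fun i _ => hf.le_map_sum (fun _ _ => sq_nonneg _)
          (sum_norm_sq_row_of_mem_unitaryGroup hU i) fun j _ => hM.eigenvalues_nonneg j
    _ = ∑ i, f (RCLike.re (M i i)) := by
        simp only [re_diag_eq_sum_norm_sq_mul_eigenvalues hM.1, U]

lemma spectralSum_le_sum_diag_conj (hf : ConcaveOn ℝ (Set.Ici 0) f) {M U : Matrix n n 𝕜}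
    (hM : M.PosSemidef) (hU : U ∈ unitaryGroup n 𝕜) :
    spectralSum f M ≤ ∑ i, f (RCLike.re ((Uᴴ * M * U) i i)) := by
  rw [← spectralSum_conjTranspose_mul_mul f M hU]
  exact spectralSum_le_sum_diag hf (hM.conjTranspose_mul_mul_same U)

lemma concaveOn_spectralSum (hf : ConcaveOn ℝ (Set.Ici 0) f) :
    ConcaveOn ℝ {M : Matrix n n 𝕜 | M.PosSemidef} (spectralSum f) := by
  have hconv : Convex ℝ {M : Matrix n n 𝕜 | M.PosSemidef} := fun M hM N hN a b ha hb _ =>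
    (PosSemidef.smul hM ha).add (PosSemidef.smul hN hb)
  refine ⟨hconv, fun M hM N hN a b ha hb hab => ?_⟩
  have hMN := (hconv hM hN ha hb hab).1
  set U := (hMN.eigenvectorUnitary : Matrix n n 𝕜)
  have hU : U ∈ unitaryGroup n 𝕜 := hMN.eigenvectorUnitary.2
  have heig (i : n) : hMN.eigenvalues i =
      a • RCLike.re ((Uᴴ * M * U) i i) + b • RCLike.re ((Uᴴ * N * U) i i) := by
    have h := congrFun₂ (conjTranspose_eigenvectorUnitary_mul_mul hMN) i i
    rw [mul_add, add_mul, Matrix.mul_smul, Matrix.mul_smul, Matrix.smul_mul, Matrix.smul_mul,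
      diagonal_apply_eq] at h
    simpa [RCLike.smul_re] using (congrArg RCLike.re h).symm
  calc a • spectralSum f M + b • spectralSum f N
      ≤ a • ∑ i, f (RCLike.re ((Uᴴ * M * U) i i)) + b • ∑ i, f (RCLike.re ((Uᴴ * N * U) i i)) := by
        gcongr
        · exact spectralSum_le_sum_diag_conj hf hM hU
        · exact spectralSum_le_sum_diag_conj hf hN hU
    _ = ∑ i, (a • f (RCLike.re ((Uᴴ * M * U) i i)) + b • f (RCLike.re ((Uᴴ * N * U) i i))) := by
        rw [Finset.smul_sum, Finset.smul_sum, Finset.sum_add_distrib]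
    _ ≤ ∑ i, f (a • RCLike.re ((Uᴴ * M * U) i i) + b • RCLike.re ((Uᴴ * N * U) i i)) :=
        Finset.sum_le_sum fun i _ => hf.2 (re_diag_nonneg (hM.conjTranspose_mul_mul_same U) i)
          (re_diag_nonneg (hN.conjTranspose_mul_mul_same U) i) ha hb hab
    _ = spectralSum f (a • M + b • N) := by
        simp only [spectralSum_eq_sum_eigenvalues f hMN, heig]

lemma spectralSum_sum_le {κ : Type*} [Fintype κ] (hf : ConcaveOn ℝ (Set.Ici 0) f) (hf0 : f 0 = 0)
    {M : κ → Matrix n n 𝕜} (hM : ∀ k, (M k).PosSemidef) :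
    spectralSum f (∑ k, M k) ≤ ∑ k, spectralSum f (M k) := by
  classical
  choose B hBB hBdiag using fun k =>
    exists_mul_conjTranspose_eq_and_conjTranspose_mul_eq_diagonal (hM k)
  -- `P * Pᴴ = ∑ M k`, while the diagonal of `Pᴴ * P` lists the eigenvalues of all the `M k`.
  let P : Matrix n (κ × n) 𝕜 := of fun i x => B x.1 i x.2
  have hP : P * Pᴴ = ∑ k, M k := by
    ext i j
    simp [P, ← hBB, mul_apply, Matrix.sum_apply, Fintype.sum_prod_type]
  have hdiag (x : κ × n) : RCLike.re ((Pᴴ * P) x x) = (hM x.1).1.eigenvalues x.2 := by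
    have h : (Pᴴ * P) x x = ((B x.1)ᴴ * B x.1) x.2 x.2 := rfl
    rw [h, hBdiag, diagonal_apply_eq, RCLike.ofReal_re]
  calc spectralSum f (∑ k, M k) = spectralSum f (Pᴴ * P) := by
        rw [← hP, spectralSum_mul_comm hf0]
    _ ≤ ∑ x, f (RCLike.re ((Pᴴ * P) x x)) :=
        spectralSum_le_sum_diag hf (posSemidef_conjTranspose_mul_self P)
    _ = ∑ k, spectralSum f (M k) := by
        simp only [hdiag, Fintype.sum_prod_type, spectralSum_eq_sum_eigenvalues f (hM _).1]

end SpectralSum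

section ClassicalEntropy

/-- The summand `-x log₂ x` of the Shannon and von Neumann entropies. -/
def negMulLogTwo (x : ℝ) : ℝ := -(x * Real.logb 2 x)

lemma negMulLogTwo_zero : negMulLogTwo 0 = 0 := by simp [negMulLogTwo]

lemma negMulLogTwo_mul (x y : ℝ) :
    negMulLogTwo (x * y) = y * negMulLogTwo x + x * negMulLogTwo y := by
  rcases eq_or_ne x 0 with rfl | hx
  · simp [negMulLogTwo]
  rcases eq_or_ne y 0 with rfl | hy
  · simp [negMulLogTwo]
  simp only [negMulLogTwo, Real.logb_mul hx hy]
  ring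

lemma concaveOn_negMulLogTwo : ConcaveOn ℝ (Set.Ici 0) negMulLogTwo := by
  have h : negMulLogTwo = (Real.log 2)⁻¹ • Real.negMulLog := by
    ext x
    simp only [negMulLogTwo, Real.logb, Real.negMulLog, Pi.smul_apply, smul_eq_mul]
    ring
  rw [h]
  exact Real.concaveOn_negMulLog.smul (inv_nonneg.2 (Real.log_nonneg one_le_two))

lemma le_margA {I J : Type} [Fintype J] {q : I × J → ℝ} (hq : ∀ x, 0 ≤ q x) (x : I × J) :
    q x ≤ margA q x.1 :=
  Finset.single_le_sum (f := fun j => q (x.1, j)) (fun _ _ => hq _) (Finset.mem_univ x.2)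

lemma le_margB {I J : Type} [Fintype I] {q : I × J → ℝ} (hq : ∀ x, 0 ≤ q x) (x : I × J) :
    q x ≤ margB q x.2 :=
  Finset.single_le_sum (f := fun i => q (i, x.2)) (fun _ _ => hq _) (Finset.mem_univ x.1)

variable {I J : Type} [Fintype I] [Fintype J]

lemma shannon_eq_sum_negMulLogTwo (p : I → ℝ) : shannon p = ∑ i, negMulLogTwo (p i) := by
  simp only [shannon, negMulLogTwo, Finset.sum_neg_distrib]

lemma klDiv_nonneg {p q : I → ℝ} (hp : ∀ i, 0 ≤ p i) (hq : ∀ i, 0 ≤ q i)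
    (hpq : ∀ i, q i = 0 → p i = 0) (hsum : ∑ i, q i ≤ ∑ i, p i) : 0 ≤ klDiv p q := by
  have hterm (i : I) : p i - q i ≤ p i * Real.log (p i / q i) := by
    rcases (hq i).eq_or_lt with hqi | hqi
    · simp [hpq i hqi.symm, ← hqi]
    · have h := mul_nonneg hqi.le
        (InformationTheory.klFun_nonneg (div_nonneg (hp i) hqi.le))
      rw [InformationTheory.klFun_apply] at h
      field_simp at h
      linarith
  have hlog : klDiv p q = (∑ i, p i * Real.log (p i / q i)) / Real.log 2 := by
    simp only [klDiv, Real.logb, mul_div_assoc, Finset.sum_div]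
  rw [hlog]
  refine div_nonneg ?_ (Real.log_nonneg one_le_two)
  calc 0 ≤ ∑ i, (p i - q i) := by rwa [Finset.sum_sub_distrib, sub_nonneg]
    _ ≤ _ := Finset.sum_le_sum fun i _ => hterm i

lemma classMI_eq_klDiv {q : I × J → ℝ} (hq : ∀ x, 0 ≤ q x) :
    classMI q = klDiv q fun x => margA q x.1 * margB q x.2 := by
  have hterm (x : I × J) : q x * Real.logb 2 (q x / (margA q x.1 * margB q x.2)) =
      q x * Real.logb 2 (q x) - q x * Real.logb 2 (margA q x.1) -
        q x * Real.logb 2 (margB q x.2) := by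
    rcases (hq x).eq_or_lt with h | h
    · simp [← h]
    · have hA := (h.trans_le (le_margA hq x)).ne'
      have hB := (h.trans_le (le_margB hq x)).ne'
      rw [Real.logb_div h.ne' (mul_ne_zero hA hB), Real.logb_mul hA hB]
      ring
  have hA : ∑ x, q x * Real.logb 2 (margA q x.1) = -shannon (margA q) := by
    simp only [shannon, neg_neg, Fintype.sum_prod_type, ← Finset.sum_mul, margA]
  have hB : ∑ x, q x * Real.logb 2 (margB q x.2) = -shannon (margB q) := by
    simp only [shannon, neg_neg, Fintype.sum_prod_type_right, ← Finset.sum_mul, margB]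
  simp only [klDiv, hterm, Finset.sum_sub_distrib, hA, hB, classMI, shannon]
  ring

lemma classMI_nonneg {q : I × J → ℝ} (hq : IsProbDist q) : 0 ≤ classMI q := by
  have hsumA : ∑ i, margA q i = 1 := by rw [← hq.2, Fintype.sum_prod_type]; rfl
  have hsumB : ∑ j, margB q j = 1 := by rw [← hq.2, Fintype.sum_prod_type_right]; rfl
  rw [classMI_eq_klDiv hq.1]
  refine klDiv_nonneg hq.1 (fun x => ?_) (fun x hx => ?_) ?_
  · exact mul_nonneg ((hq.1 x).trans (le_margA hq.1 x)) ((hq.1 x).trans (le_margB hq.1 x))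
  · rcases mul_eq_zero.1 hx with h | h
    · exact ((le_margA hq.1 x).trans_eq h).antisymm (hq.1 x)
    · exact ((le_margB hq.1 x).trans_eq h).antisymm (hq.1 x)
  · simp only [Fintype.sum_prod_type, ← Finset.mul_sum, hsumA, hsumB, mul_one]
    rw [← Fintype.sum_prod_type, hq.2]

end ClassicalEntropy

section Density

variable {m n K : Type} [Fintype m] [Fintype n] [Fintype K]

lemma IsDensity.kronecker {M : Matrix m m ℂ} {N : Matrix n n ℂ} (hM : IsDensity M)
    (hN : IsDensity N) : IsDensity (M ⊗ₖ N) :=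
  ⟨hM.1.kronecker hN.1, by rw [trace_kronecker, hM.2, hN.2, one_mul]⟩

lemma IsDensity.sum_smul {p : K → ℝ} (hp : IsProbDist p) {σ : K → Matrix n n ℂ}
    (hσ : ∀ k, IsDensity (σ k)) : IsDensity (∑ k, (p k : ℂ) • σ k) := by
  refine ⟨posSemidef_sum _ fun k _ => (hσ k).1.smul (Complex.zero_le_real.2 (hp.1 k)), ?_⟩
  simp only [trace_sum, trace_smul, (hσ _).2, smul_eq_mul, mul_one]
  exact_mod_cast hp.2

lemma IsDensity.submatrix_equiv {M : Matrix n n ℂ} (hM : IsDensity M) (e : m ≃ n) :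
    IsDensity (M.submatrix e e) :=
  ⟨hM.1.submatrix e, (Fintype.sum_equiv e _ _ fun _ => rfl).trans hM.2⟩

lemma IsDensity.conjTranspose_mul_mul [DecidableEq n] {M U : Matrix n n ℂ} (hM : IsDensity M)
    (hU : U ∈ unitaryGroup n ℂ) : IsDensity (Uᴴ * M * U) := by
  refine ⟨hM.1.conjTranspose_mul_mul_same U, ?_⟩
  rw [trace_mul_cycle, ← star_eq_conjTranspose, mem_unitaryGroup_iff.1 hU, one_mul, hM.2]

lemma IsDensity.isProbDist_diag {M : Matrix n n ℂ} (hM : IsDensity M) :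
    IsProbDist fun i => (M i i).re :=
  ⟨re_diag_nonneg hM.1, by simpa [trace] using congrArg Complex.re hM.2⟩

lemma IsDensity.sum_eigenvalues [DecidableEq n] {M : Matrix n n ℂ} (hM : IsDensity M) :
    ∑ i, hM.1.1.eigenvalues i = 1 := by
  have h := congrArg Complex.re (hM.1.1.trace_eq_sum_eigenvalues.symm.trans hM.2)
  simpa using h

end Density

section VonNeumannEntropy

variable {m n K : Type} [Fintype m] [DecidableEq m] [Fintype n] [DecidableEq n] [Fintype K]

lemma vnEntropy_eq_spectralSum {M : Matrix n n ℂ} (hM : M.IsHermitian) :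
    vnEntropy M = spectralSum negMulLogTwo M := by
  rw [spectralSum_eq_sum_eigenvalues _ hM, vnEntropy, dif_pos hM, ← Finset.sum_neg_distrib]
  rfl

lemma vnEntropy_diagonal (d : n → ℝ) :
    vnEntropy (diagonal fun i => (d i : ℂ)) = shannon d := by
  rw [vnEntropy_eq_spectralSum (isHermitian_diagonal_of_self_adjoint _ (by ext; simp)),
    shannon_eq_sum_negMulLogTwo]
  exact spectralSum_diagonal (𝕜 := ℂ) _ d

lemma vnEntropy_conjTranspose_mul_mul {M U : Matrix n n ℂ} (hM : M.IsHermitian)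
    (hU : U ∈ unitaryGroup n ℂ) : vnEntropy (Uᴴ * M * U) = vnEntropy M := by
  rw [vnEntropy_eq_spectralSum hM,
    vnEntropy_eq_spectralSum (isHermitian_conjTranspose_mul_mul U hM),
    spectralSum_conjTranspose_mul_mul _ _ hU]

lemma vnEntropy_le_shannon_diag {M : Matrix n n ℂ} (hM : M.PosSemidef) :
    vnEntropy M ≤ shannon fun i => (M i i).re := by
  rw [vnEntropy_eq_spectralSum hM.1, shannon_eq_sum_negMulLogTwo]
  exact spectralSum_le_sum_diag concaveOn_negMulLogTwo hM

lemma vnEntropy_kronecker {M : Matrix m m ℂ} {N : Matrix n n ℂ} (hM : IsDensity M)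
    (hN : IsDensity N) : vnEntropy (M ⊗ₖ N) = vnEntropy M + vnEntropy N := by
  rw [vnEntropy_eq_spectralSum (hM.kronecker hN).1.1, vnEntropy_eq_spectralSum hM.1.1,
    vnEntropy_eq_spectralSum hN.1.1, spectralSum_kronecker _ hM.1.1 hN.1.1,
    spectralSum_eq_sum_eigenvalues _ hM.1.1, spectralSum_eq_sum_eigenvalues _ hN.1.1]
  simp only [negMulLogTwo_mul, Finset.sum_add_distrib, ← Finset.sum_mul, ← Finset.mul_sum,
    hM.sum_eigenvalues, hN.sum_eigenvalues, one_mul]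

lemma vnEntropy_smul {M : Matrix n n ℂ} (hM : IsDensity M) (c : ℝ) :
    vnEntropy ((c : ℂ) • M) = negMulLogTwo c + c * vnEntropy M := by
  rw [Complex.coe_smul, vnEntropy_eq_spectralSum (hM.1.1.smul (IsSelfAdjoint.all c)),
    vnEntropy_eq_spectralSum hM.1.1, spectralSum_smul _ _ hM.1.1,
    spectralSum_eq_sum_eigenvalues _ hM.1.1]
  simp only [negMulLogTwo_mul, Finset.sum_add_distrib, ← Finset.sum_mul, ← Finset.mul_sum,
    hM.sum_eigenvalues, one_mul]

lemma sum_mul_vnEntropy_le_vnEntropy_sum_smul {p : K → ℝ} (hp : IsProbDist p)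
    {σ : K → Matrix n n ℂ} (hσ : ∀ k, IsDensity (σ k)) :
    ∑ k, p k * vnEntropy (σ k) ≤ vnEntropy (∑ k, (p k : ℂ) • σ k) := by
  have h := (concaveOn_spectralSum (𝕜 := ℂ) (n := n) concaveOn_negMulLogTwo).le_map_sum
    (t := Finset.univ) (w := p) (p := σ) (fun k _ => hp.1 k) hp.2 fun k _ => (hσ k).1
  rw [vnEntropy_eq_spectralSum (IsDensity.sum_smul hp hσ).1.1]
  simpa only [vnEntropy_eq_spectralSum (hσ _).1.1, Complex.coe_smul, smul_eq_mul] using h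

lemma vnEntropy_sum_smul_le {p : K → ℝ} (hp : ∀ k, 0 ≤ p k) {σ : K → Matrix n n ℂ}
    (hσ : ∀ k, IsDensity (σ k)) :
    vnEntropy (∑ k, (p k : ℂ) • σ k) ≤ shannon p + ∑ k, p k * vnEntropy (σ k) := by
  have hpos (k : K) : ((p k : ℂ) • σ k).PosSemidef :=
    (hσ k).1.smul (Complex.zero_le_real.2 (hp k))
  have hsum := posSemidef_sum Finset.univ fun k _ => hpos k
  calc vnEntropy (∑ k, (p k : ℂ) • σ k) ≤ ∑ k, vnEntropy ((p k : ℂ) • σ k) := by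
        simp only [vnEntropy_eq_spectralSum hsum.1, vnEntropy_eq_spectralSum (hpos _).1]
        exact spectralSum_sum_le concaveOn_negMulLogTwo negMulLogTwo_zero hpos
    _ = shannon p + ∑ k, p k * vnEntropy (σ k) := by
        simp only [vnEntropy_smul (hσ _), Finset.sum_add_distrib, shannon_eq_sum_negMulLogTwo]

end VonNeumannEntropy

section PartialTrace

variable {A B K : Type} [Fintype K]

lemma ptraceB_kronecker [Fintype B] (M : Matrix A A ℂ) (N : Matrix B B ℂ) :
    ptraceB (M ⊗ₖ N) = N.trace • M := by
  ext a a'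
  simp [ptraceB, trace, ← Finset.mul_sum, mul_comm]

lemma ptraceA_kronecker [Fintype A] (M : Matrix A A ℂ) (N : Matrix B B ℂ) :
    ptraceA (M ⊗ₖ N) = M.trace • N := by
  ext b b'
  simp [ptraceA, trace, ← Finset.sum_mul]

lemma ptraceB_add [Fintype B] (ρ σ : Matrix (A × B) (A × B) ℂ) :
    ptraceB (ρ + σ) = ptraceB ρ + ptraceB σ := by
  ext a a'
  exact Finset.sum_add_distrib

lemma ptraceA_add [Fintype A] (ρ σ : Matrix (A × B) (A × B) ℂ) :
    ptraceA (ρ + σ) = ptraceA ρ + ptraceA σ := by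
  ext b b'
  exact Finset.sum_add_distrib

lemma ptraceB_sum_smul [Fintype B] (c : K → ℂ) (σ : K → Matrix (A × B) (A × B) ℂ) :
    ptraceB (∑ k, c k • σ k) = ∑ k, c k • ptraceB (σ k) := by
  ext a a'
  simp only [ptraceB, of_apply, Matrix.sum_apply, Matrix.smul_apply, Finset.smul_sum]
  exact Finset.sum_comm

lemma ptraceA_sum_smul [Fintype A] (c : K → ℂ) (σ : K → Matrix (A × B) (A × B) ℂ) :
    ptraceA (∑ k, c k • σ k) = ∑ k, c k • ptraceA (σ k) := by
  ext b b'
  simp only [ptraceA, of_apply, Matrix.sum_apply, Matrix.smul_apply, Finset.smul_sum]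
  exact Finset.sum_comm

lemma kronecker_induction_on [Finite A] [Finite B] {P : Matrix (A × B) (A × B) ℂ → Prop}
    (ρ : Matrix (A × B) (A × B) ℂ) (add : ∀ ρ σ, P ρ → P σ → P (ρ + σ))
    (kronecker : ∀ (M : Matrix A A ℂ) (N : Matrix B B ℂ), P (M ⊗ₖ N)) : P ρ := by
  classical
  induction ρ using Matrix.induction_on' with
  | h_zero => simpa using kronecker 0 0
  | h_add ρ σ hρ hσ => exact add ρ σ hρ hσ
  | h_std_basis i j x =>
    have h := kronecker (single i.1 j.1 x) (single i.2 j.2 1)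
    rwa [single_kronecker_single, mul_one] at h

variable [Fintype A] [Fintype B]

lemma IsDensity.ptraceB {ρ : Matrix (A × B) (A × B) ℂ} (hρ : IsDensity ρ) :
    IsDensity (ptraceB ρ) := by
  constructor
  · have h : _root_.ptraceB ρ = ∑ b, ρ.submatrix (·, b) (·, b) := by
      ext a a'
      simp [_root_.ptraceB, Matrix.sum_apply]
    rw [h]
    exact posSemidef_sum _ fun b _ => hρ.1.submatrix _
  · rw [← hρ.2, trace, trace, Fintype.sum_prod_type]
    rfl

lemma IsDensity.ptraceA {ρ : Matrix (A × B) (A × B) ℂ} (hρ : IsDensity ρ) :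
    IsDensity (ptraceA ρ) :=
  (hρ.submatrix_equiv (Equiv.prodComm B A)).ptraceB

lemma ptraceB_conjTranspose_kronecker_mul_mul [DecidableEq B] (ρ : Matrix (A × B) (A × B) ℂ)
    (U : Matrix A A ℂ) {V : Matrix B B ℂ} (hV : V ∈ unitaryGroup B ℂ) :
    ptraceB ((U ⊗ₖ V)ᴴ * ρ * (U ⊗ₖ V)) = Uᴴ * ptraceB ρ * U := by
  induction ρ using kronecker_induction_on with
  | add ρ σ hρ hσ => simp only [mul_add, add_mul, ptraceB_add, hρ, hσ]
  | kronecker M N =>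
    rw [conjTranspose_kronecker, ← mul_kronecker_mul, ← mul_kronecker_mul, ptraceB_kronecker,
      ptraceB_kronecker, trace_mul_cycle, ← star_eq_conjTranspose V, mem_unitaryGroup_iff.1 hV,
      one_mul, Matrix.mul_smul, Matrix.smul_mul]

lemma ptraceA_conjTranspose_kronecker_mul_mul [DecidableEq A] (ρ : Matrix (A × B) (A × B) ℂ)
    {U : Matrix A A ℂ} (hU : U ∈ unitaryGroup A ℂ) (V : Matrix B B ℂ) :
    ptraceA ((U ⊗ₖ V)ᴴ * ρ * (U ⊗ₖ V)) = Vᴴ * ptraceA ρ * V := by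
  induction ρ using kronecker_induction_on with
  | add ρ σ hρ hσ => simp only [mul_add, add_mul, ptraceA_add, hρ, hσ]
  | kronecker M N =>
    rw [conjTranspose_kronecker, ← mul_kronecker_mul, ← mul_kronecker_mul, ptraceA_kronecker,
      ptraceA_kronecker, trace_mul_cycle, ← star_eq_conjTranspose U, mem_unitaryGroup_iff.1 hU,
      one_mul, Matrix.mul_smul, Matrix.smul_mul]

end PartialTrace

section MutualInformation

variable {A B K : Type} [Fintype A] [Fintype B] [Fintype K] [DecidableEq A] [DecidableEq B]

lemma shannon_re_diag_eq_vnEntropy {n : Type} [Fintype n] [DecidableEq n] {M U : Matrix n n ℂ}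
    (hM : M.IsHermitian) (hU : U ∈ unitaryGroup n ℂ) {d : n → ℝ}
    (hd : Uᴴ * M * U = diagonal fun i => (d i : ℂ)) :
    shannon (fun i => ((Uᴴ * M * U) i i).re) = vnEntropy M := by
  rw [← vnEntropy_conjTranspose_mul_mul hM hU, hd, vnEntropy_diagonal]
  simp only [diagonal_apply_eq, Complex.ofReal_re]

-- Measure both systems in eigenbases of the reduced states: this keeps the marginal entropies,
-- can only increase the joint one, and leaves a classical mutual information.
lemma mutInfo_nonneg {ρ : Matrix (A × B) (A × B) ℂ} (hρ : IsDensity ρ) : 0 ≤ mutInfo ρ := by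
  have hA := hρ.ptraceB.1.1
  have hB := hρ.ptraceA.1.1
  set U := (hA.eigenvectorUnitary : Matrix A A ℂ)
  set V := (hB.eigenvectorUnitary : Matrix B B ℂ)
  have hU : U ∈ unitaryGroup A ℂ := hA.eigenvectorUnitary.2
  have hV : V ∈ unitaryGroup B ℂ := hB.eigenvectorUnitary.2
  have hUV : U ⊗ₖ V ∈ unitaryGroup (A × B) ℂ := kronecker_mem_unitary hU hV
  have hσ := hρ.conjTranspose_mul_mul hUV
  set σ := (U ⊗ₖ V)ᴴ * ρ * (U ⊗ₖ V)
  let q : A × B → ℝ := fun x => (σ x x).re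
  have hqA : margA q = fun a => ((Uᴴ * ptraceB ρ * U) a a).re := by
    rw [← ptraceB_conjTranspose_kronecker_mul_mul ρ U hV]
    exact funext fun a => (Complex.re_sum _ _).symm
  have hqB : margB q = fun b => ((Vᴴ * ptraceA ρ * V) b b).re := by
    rw [← ptraceA_conjTranspose_kronecker_mul_mul ρ hU V]
    exact funext fun b => (Complex.re_sum _ _).symm
  have hSA : shannon (margA q) = vnEntropy (ptraceB ρ) := by
    rw [hqA]
    exact shannon_re_diag_eq_vnEntropy hA hU (conjTranspose_eigenvectorUnitary_mul_mul hA)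
  have hSB : shannon (margB q) = vnEntropy (ptraceA ρ) := by
    rw [hqB]
    exact shannon_re_diag_eq_vnEntropy hB hV (conjTranspose_eigenvectorUnitary_mul_mul hB)
  have hSAB : vnEntropy ρ ≤ shannon q := by
    rw [← vnEntropy_conjTranspose_mul_mul hρ.1.1 hUV]
    exact vnEntropy_le_shannon_diag hσ.1
  calc 0 ≤ classMI q := classMI_nonneg hσ.isProbDist_diag
    _ ≤ mutInfo ρ := by
      rw [classMI, mutInfo, hSA, hSB]
      exact sub_le_sub_left hSAB _

lemma mutInfo_sum_smul_kronecker_le {p : K → ℝ} (hp : IsProbDist p) {M : K → Matrix A A ℂ}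
    {N : K → Matrix B B ℂ} (hM : ∀ k, IsDensity (M k)) (hN : ∀ k, IsDensity (N k)) :
    mutInfo (∑ k, (p k : ℂ) • (M k ⊗ₖ N k)) ≤ 2 * shannon p := by
  have hA : vnEntropy (ptraceB (∑ k, (p k : ℂ) • (M k ⊗ₖ N k))) ≤
      shannon p + ∑ k, p k * vnEntropy (M k) := by
    simp only [ptraceB_sum_smul, ptraceB_kronecker, (hN _).2, one_smul]
    exact vnEntropy_sum_smul_le hp.1 hM
  have hB : vnEntropy (ptraceA (∑ k, (p k : ℂ) • (M k ⊗ₖ N k))) ≤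
      shannon p + ∑ k, p k * vnEntropy (N k) := by
    simp only [ptraceA_sum_smul, ptraceA_kronecker, (hM _).2, one_smul]
    exact vnEntropy_sum_smul_le hp.1 hN
  have hAB : ∑ k, p k * vnEntropy (M k) + ∑ k, p k * vnEntropy (N k) ≤
      vnEntropy (∑ k, (p k : ℂ) • (M k ⊗ₖ N k)) := by
    have h := sum_mul_vnEntropy_le_vnEntropy_sum_smul hp fun k => (hM k).kronecker (hN k)
    simpa only [vnEntropy_kronecker (hM _) (hN _), mul_add, Finset.sum_add_distrib] using h
  rw [mutInfo]
  linarith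

end MutualInformation

section PiKronecker

variable {ι R : Type*} [Fintype ι] [CommSemiring R] {m : ι → Type*}

/-- The tensor product of a finite family of matrices, the analogue of `Matrix.kronecker` with
rows and columns indexed by dependent functions. -/
def piKronecker {n : ι → Type*} (M : ∀ i, Matrix (m i) (n i) R) :
    Matrix (∀ i, m i) (∀ i, n i) R :=
  of fun f g => ∏ i, M i (f i) (g i)

lemma conjTranspose_piKronecker [StarRing R] {n : ι → Type*} (M : ∀ i, Matrix (m i) (n i) R) :
    (piKronecker M)ᴴ = piKronecker fun i => (M i)ᴴ := by
  ext f g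
  simp [piKronecker, star_prod]

variable [DecidableEq ι] [∀ i, Fintype (m i)]

lemma piKronecker_mul_piKronecker {l n : ι → Type*} (M : ∀ i, Matrix (l i) (m i) R)
    (N : ∀ i, Matrix (m i) (n i) R) :
    piKronecker M * piKronecker N = piKronecker fun i => M i * N i := by
  ext f g
  simp [piKronecker, mul_apply, Fintype.prod_sum, Finset.prod_mul_distrib]

lemma trace_piKronecker (M : ∀ i, Matrix (m i) (m i) R) :
    (piKronecker M).trace = ∏ i, (M i).trace := by
  simp [piKronecker, trace, Fintype.prod_sum]

lemma sum_piKronecker_update [∀ i, DecidableEq (m i)] (M : ∀ i, Matrix (m i) (m i) R) (k : ι)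
    (x y : m k) :
    (∑ f, if f k = x then piKronecker M f (Function.update f k y) else 0) =
      M k x y * ∏ i ∈ {k}ᶜ, (M i).trace := by
  set N := Function.update M k (single x x (M k x y))
  have hNk : N k = single x x (M k x y) := Function.update_self ..
  have hNi {i : ι} (hi : i ∈ ({k} : Finset ι)ᶜ) : N i = M i :=
    Function.update_of_ne (by simpa using hi) ..
  have hterm (f : ∀ i, m i) :
      (if f k = x then piKronecker M f (Function.update f k y) else 0) = piKronecker N f f := by
    have hrest : ∏ i ∈ {k}ᶜ, M i (f i) (Function.update f k y i) = ∏ i ∈ {k}ᶜ, N i (f i) (f i) :=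
      Finset.prod_congr rfl fun i hi => by
        rw [hNi hi, Function.update_of_ne (by simpa using hi)]
    simp only [piKronecker, of_apply]
    rw [Fintype.prod_eq_mul_prod_compl k, Fintype.prod_eq_mul_prod_compl k, hrest,
      Function.update_self, hNk]
    rcases eq_or_ne (f k) x with hf | hf
    · simp [hf]
    · simp [hf, hf.symm]
  calc _ = (piKronecker N).trace := Finset.sum_congr rfl fun f _ => hterm f
    _ = _ := by
      rw [trace_piKronecker, Fintype.prod_eq_mul_prod_compl k, hNk, trace_single_eq_same,
        Finset.prod_congr rfl fun i hi => congrArg trace (hNi hi)]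

end PiKronecker

section TensorPower

variable {A B K : Type}

lemma isDensity_piKronecker {ι : Type} [Fintype ι] [DecidableEq ι] {m : ι → Type}
    [∀ i, Fintype (m i)] {M : ∀ i, Matrix (m i) (m i) ℂ} (hM : ∀ i, IsDensity (M i)) :
    IsDensity (piKronecker M) := by
  classical
  choose C hC _ using fun i =>
    exists_mul_conjTranspose_eq_and_conjTranspose_mul_eq_diagonal (hM i).1
  have hpsd := posSemidef_self_mul_conjTranspose (piKronecker C)
  simp only [conjTranspose_piKronecker, piKronecker_mul_piKronecker, hC] at hpsd
  exact ⟨hpsd, by simp only [trace_piKronecker, (hM _).2, Finset.prod_const_one]⟩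

lemma tpow_eq_submatrix_piKronecker (σ : Matrix (A × B) (A × B) ℂ) (n : ℕ) :
    tpow σ n = (piKronecker fun _ => σ).submatrix
      (Equiv.arrowProdEquivProdArrow (Fin n) (fun _ => A) fun _ => B).symm
      (Equiv.arrowProdEquivProdArrow (Fin n) (fun _ => A) fun _ => B).symm :=
  rfl

lemma tpow_kronecker (M : Matrix A A ℂ) (N : Matrix B B ℂ) (n : ℕ) :
    tpow (M ⊗ₖ N) n = (piKronecker fun _ => M) ⊗ₖ (piKronecker fun _ => N) := by
  ext x y
  simp [tpow, piKronecker, Finset.prod_mul_distrib]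

variable [Fintype A] [Fintype B] [Fintype K]

lemma IsDensity.tpow {σ : Matrix (A × B) (A × B) ℂ} (hσ : IsDensity σ) (n : ℕ) :
    IsDensity (tpow σ n) := by
  rw [tpow_eq_submatrix_piKronecker]
  exact (isDensity_piKronecker fun _ => hσ).submatrix_equiv _

variable [DecidableEq A] [DecidableEq B]

lemma copyMarginal_tpow {σ : Matrix (A × B) (A × B) ℂ} (hσ : σ.trace = 1) {n : ℕ} (k : Fin n) :
    copyMarginal (tpow σ n) k = σ := by
  let e := Equiv.arrowProdEquivProdArrow (Fin n) (fun _ => A) fun _ => B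
  ext x y
  have hterm (f : Fin n → A × B) :
      (if f k = x then piKronecker (fun _ => σ) f (Function.update f k y) else 0) =
        if (e f).1 k = x.1 ∧ (e f).2 k = x.2 then
          tpow σ n (e f) (Function.update (e f).1 k y.1, Function.update (e f).2 k y.2)
        else 0 := by
    have hupdate : Function.update f k y =
        fun i => (Function.update (e f).1 k y.1 i, Function.update (e f).2 k y.2 i) := by
      ext i <;> rcases eq_or_ne i k with rfl | hi <;> simp [*, e]
    rw [hupdate]
    exact if_congr Prod.ext_iff rfl rfl
  calc copyMarginal (tpow σ n) k x y
      = ∑ f : Fin n → A × B,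
          if f k = x then piKronecker (fun _ => σ) f (Function.update f k y) else 0 := by
        simp only [copyMarginal, of_apply, ← Fintype.sum_prod_type']
        exact (Fintype.sum_equiv e _ _ hterm).symm
    _ = σ x y := by
        rw [sum_piKronecker_update]
        simp only [hσ, Finset.prod_const_one, mul_one]

lemma copyMarginal_sum_smul {n : ℕ} (c : K → ℂ)
    (τ : K → Matrix ((Fin n → A) × (Fin n → B)) ((Fin n → A) × (Fin n → B)) ℂ) (k : Fin n) :
    copyMarginal (∑ i, c i • τ i) k = ∑ i, c i • copyMarginal (τ i) k := by
  ext x y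
  simp only [copyMarginal, of_apply, Matrix.sum_apply, Matrix.smul_apply, Finset.smul_sum]
  refine Eq.trans (Finset.sum_congr rfl fun f _ => ?_) Finset.sum_comm
  refine Eq.trans (Finset.sum_congr rfl fun g _ => ?_) Finset.sum_comm
  split_ifs <;> simp

lemma isBroadcast_sum_smul_tpow {p : K → ℝ} (hp : IsProbDist p)
    {σ : K → Matrix (A × B) (A × B) ℂ} (hσ : ∀ k, IsDensity (σ k)) (n : ℕ) :
    IsBroadcast n (∑ k, (p k : ℂ) • tpow (σ k) n) (∑ k, (p k : ℂ) • σ k) :=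
  ⟨IsDensity.sum_smul hp fun k => (hσ k).tpow n, fun i => by
    simp only [copyMarginal_sum_smul, copyMarginal_tpow (hσ _).2]⟩

end TensorPower

section BroadcastInformation

variable {A B K : Type} [Fintype A] [Fintype B] [Fintype K] [DecidableEq A] [DecidableEq B]

lemma Ib_nonneg (n : ℕ) (ρ : Matrix (A × B) (A × B) ℂ) : 0 ≤ Ib n ρ := by
  refine Real.sInf_nonneg ?_
  rintro _ ⟨τ, hτ, rfl⟩
  exact mutInfo_nonneg hτ.1

lemma Ib_le_mutInfo {n : ℕ} {ρ : Matrix (A × B) (A × B) ℂ}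
    {τ : Matrix ((Fin n → A) × (Fin n → B)) ((Fin n → A) × (Fin n → B)) ℂ}
    (hτ : IsBroadcast n τ ρ) : Ib n ρ ≤ mutInfo τ := by
  refine csInf_le ⟨0, ?_⟩ ⟨τ, hτ, rfl⟩
  rintro _ ⟨τ, hτ, rfl⟩
  exact mutInfo_nonneg hτ.1

lemma Ib_sum_smul_kronecker_le {p : K → ℝ} (hp : IsProbDist p) {M : K → Matrix A A ℂ}
    {N : K → Matrix B B ℂ} (hM : ∀ k, IsDensity (M k)) (hN : ∀ k, IsDensity (N k)) (n : ℕ) :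
    Ib n (∑ k, (p k : ℂ) • (M k ⊗ₖ N k)) ≤ 2 * shannon p := by
  refine (Ib_le_mutInfo
    (isBroadcast_sum_smul_tpow hp (fun k => (hM k).kronecker (hN k)) n)).trans ?_
  simp only [tpow_kronecker]
  exact mutInfo_sum_smul_kronecker_le hp
    (fun k => isDensity_piKronecker (m := fun _ => A) fun _ => hM k)
    fun k => isDensity_piKronecker (m := fun _ => B) fun _ => hN k

end BroadcastInformation

/-- the broadcast regularization of mutual information vanishes on
separable states. -/
theorem stmt_10 {A B K : Type} [Fintype A] [Fintype B] [Fintype K]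
    [DecidableEq A] [DecidableEq B]
    (p : K → ℝ) (hp : ∀ k, 0 ≤ p k) (hp1 : ∑ k, p k = 1)
    (ρA : K → Matrix A A ℂ) (ρB : K → Matrix B B ℂ)
    (hA : ∀ k, IsDensity (ρA k)) (hB : ∀ k, IsDensity (ρB k))
    (ρ : Matrix (A × B) (A × B) ℂ) (hρ : ρ = ∑ k, (p k : ℂ) • (ρA k ⊗ₖ ρB k)) :
    Tendsto (fun n : ℕ => Ib n ρ / n) atTop (nhds 0) := by
  have hbound (n : ℕ) : Ib n ρ ≤ 2 * shannon p := by
    rw [hρ]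
    exact Ib_sum_smul_kronecker_le ⟨hp, hp1⟩ hA hB n
  refine squeeze_zero (fun n => div_nonneg (Ib_nonneg n ρ) n.cast_nonneg)
    (fun n => div_le_div_of_nonneg_right (hbound n) n.cast_nonneg) ?_
  exact tendsto_const_div_atTop_nhds_zero_nat _

end
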